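/- (Uniform tail estimate for Palais–Smale sequences.) Assume N ≥ 2, 0 < α < N, p > (N+α)/N, and that the potential a satisfies (A₁) and (A₂). Fix a constant c* > 0. For every ε > 0 there exist λ_ε > 0 and r_ε > 0 such that: for every λ ≥ λ_ε, every c ≤ c*, and every (PS)_c sequence {u_n} ⊂ E_λ for J_λ, one has limsup_{n→∞} Σ_{x ∈ G, d(x,e) > r_ε} (R_α ∗ |u_n|^p)(x)|u_n(x)|^p ≤ ε. -/

import Mathlib

open scoped BigOperators ENNReal
open Filter

noncomputable section

namespace Choquard

variable {G : Type*}

/-- The word metric on a group with generating set `S`. -/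
def wordDist [Group G] (S : Finset G) (x y : G) : ℕ :=
  sInf {k : ℕ | ∃ l : List G, (∀ g ∈ l, g ∈ S) ∧ l.length = k ∧ x⁻¹ * y = l.prod}

/-- The closed ball of radius `r` about `c` in the word metric. -/
def ball [Group G] (S : Finset G) (c : G) (r : ℝ) : Set G :=
  {x | (wordDist S x c : ℝ) ≤ r}

/-- Polynomial growth of homogeneous dimension `N`. -/
def PolyGrowth [Group G] (S : Finset G) (N : ℕ) : Prop :=
  ∃ C₁ C₂ : ℝ, 0 < C₁ ∧ 0 < C₂ ∧ ∀ r : ℝ, 1 ≤ r →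
    C₁ * r ^ N ≤ ((ball S (1 : G) r).ncard : ℝ) ∧
    ((ball S (1 : G) r).ncard : ℝ) ≤ C₂ * r ^ N

/-- Riesz-type asymptotics for the kernel `R`. -/
def RieszKernel [Group G] (S : Finset G) (N : ℕ) (α : ℝ) (R : G → G → ℝ) : Prop :=
  (∀ x y, 0 < R x y) ∧
  ∃ c₁ c₂ : ℝ, 0 < c₁ ∧ 0 < c₂ ∧ ∀ x y : G, x ≠ y →
    c₁ * (wordDist S x y : ℝ) ^ (α - (N : ℝ)) ≤ R x y ∧
    R x y ≤ c₂ * (wordDist S x y : ℝ) ^ (α - (N : ℝ))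

/-- Convolution `(R ∗ f)(x) = Σ_{y ≠ x} R x y f y`. -/
def conv [DecidableEq G] (R : G → G → ℝ) (f : G → ℝ) (x : G) : ℝ :=
  ∑' y, if y = x then 0 else R x y * f y

/-- The convolution as an extended-nonnegative-real valued sum. -/
def convE [DecidableEq G] (R : G → G → ℝ) (f : G → ℝ) (x : G) : ℝ≥0∞ :=
  ∑' y, if y = x then 0 else ENNReal.ofReal (R x y * f y)

/-- Membership in `ℓ^q(G)`. -/
def Memlp (q : ℝ) (u : G → ℝ) : Prop := Summable fun x => |u x| ^ q

/-- The `ℓ^q` norm. -/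
def lpNorm (q : ℝ) (u : G → ℝ) : ℝ := (∑' x, |u x| ^ q) ^ (1 / q)

/-- The `ℓ^∞` norm. -/
def supNorm (u : G → ℝ) : ℝ := ⨆ x, |u x|

/-- The graph Laplacian `Δu(x) = Σ_{s ∈ S} (u(xs) - u(x))`. -/
def lap [Group G] (S : Finset G) (u : G → ℝ) (x : G) : ℝ :=
  ∑ s ∈ S, (u (x * s) - u x)

/-- The gradient form `∇u∇v(x) = (1/2) Σ_{s ∈ S} (u(xs)-u(x))(v(xs)-v(x))`. -/
def grad [Group G] (S : Finset G) (u v : G → ℝ) (x : G) : ℝ :=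
  (1 / 2) * ∑ s ∈ S, (u (x * s) - u x) * (v (x * s) - v x)

/-- The density `|Δu|² + |∇u|² + (1 + λa)u²`. -/
def eDensity [Group G] (S : Finset G) (a : G → ℝ) (lam : ℝ) (u : G → ℝ) (x : G) : ℝ :=
  (lap S u x) ^ 2 + grad S u u x + (1 + lam * a x) * (u x) ^ 2

/-- Membership in the space `E_λ`. -/
def MemE [Group G] (S : Finset G) (a : G → ℝ) (lam : ℝ) (u : G → ℝ) : Prop :=
  Summable (eDensity S a lam u)

/-- `‖u‖²_{E_λ}`. -/
def normEsq [Group G] (S : Finset G) (a : G → ℝ) (lam : ℝ) (u : G → ℝ) : ℝ :=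
  ∑' x, eDensity S a lam u x

/-- `‖u‖_{E_λ}`. -/
def normE [Group G] (S : Finset G) (a : G → ℝ) (lam : ℝ) (u : G → ℝ) : ℝ :=
  Real.sqrt (normEsq S a lam u)

/-- The inner product `⟨u, v⟩_{E_λ}`. -/
def innerE [Group G] (S : Finset G) (a : G → ℝ) (lam : ℝ) (u v : G → ℝ) : ℝ :=
  ∑' x, (lap S u x * lap S v x + grad S u v x + (1 + lam * a x) * (u x * v x))

/-- The nonlocal term `Σ_G (R_α ∗ |u|^p)|u|^p`. -/
def Dterm [DecidableEq G] (R : G → G → ℝ) (p : ℝ) (u : G → ℝ) : ℝ :=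
  ∑' x, conv R (fun y => |u y| ^ p) x * |u x| ^ p

/-- The nonlocal pairing `Σ_G (R_α ∗ |u|^p)|u|^{p-2} u v`. -/
def Kterm [DecidableEq G] (R : G → G → ℝ) (p : ℝ) (u v : G → ℝ) : ℝ :=
  ∑' x, conv R (fun y => |u y| ^ p) x * (|u x| ^ (p - 2) * u x * v x)

/-- The energy functional `J_λ`. -/
def Jfun [Group G] [DecidableEq G] (S : Finset G) (a : G → ℝ) (lam : ℝ)
    (R : G → G → ℝ) (p : ℝ) (u : G → ℝ) : ℝ :=
  (1 / 2) * normEsq S a lam u - (1 / (2 * p)) * Dterm R p u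

/-- The derivative pairing `(J'_λ(u), v)`. -/
def Jd [Group G] [DecidableEq G] (S : Finset G) (a : G → ℝ) (lam : ℝ)
    (R : G → G → ℝ) (p : ℝ) (u v : G → ℝ) : ℝ :=
  innerE S a lam u v - Kterm R p u v

/-- The Nehari manifold `N_λ`. -/
def nehari [Group G] [DecidableEq G] (S : Finset G) (a : G → ℝ) (lam : ℝ)
    (R : G → G → ℝ) (p : ℝ) : Set (G → ℝ) :=
  {u | MemE S a lam u ∧ u ≠ 0 ∧ Jd S a lam R p u u = 0}

/-- `m_λ = inf_{N_λ} J_λ`. -/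
def mlam [Group G] [DecidableEq G] (S : Finset G) (a : G → ℝ) (lam : ℝ)
    (R : G → G → ℝ) (p : ℝ) : ℝ :=
  sInf (Jfun S a lam R p '' nehari S a lam R p)

/-- The norm of `J'_λ(u)` in the dual space `E_λ*`. -/
def dualNorm [Group G] [DecidableEq G] (S : Finset G) (a : G → ℝ) (lam : ℝ)
    (R : G → G → ℝ) (p : ℝ) (u : G → ℝ) : ℝ :=
  sSup {t : ℝ | ∃ v, MemE S a lam v ∧ normEsq S a lam v ≤ 1 ∧ t = |Jd S a lam R p u v|}

/-- `(PS)_c` sequence for `J_λ`. -/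
def PSseq [Group G] [DecidableEq G] (S : Finset G) (a : G → ℝ) (lam : ℝ)
    (R : G → G → ℝ) (p : ℝ) (c : ℝ) (U : ℕ → G → ℝ) : Prop :=
  (∀ n, MemE S a lam (U n)) ∧
  Tendsto (fun n => Jfun S a lam R p (U n)) atTop (nhds c) ∧
  Tendsto (fun n => dualNorm S a lam R p (U n)) atTop (nhds 0)

/-- The Cayley graph of `(G, S)`. -/
def cayley [Group G] (S : Finset G) : SimpleGraph G :=
  SimpleGraph.fromRel (fun x y => x⁻¹ * y ∈ S)

/-- Condition (A₁): the potential well `Ω = {a = 0}` is nonempty, finite and connected. -/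
def CondA1 [Group G] (S : Finset G) (a : G → ℝ) : Prop :=
  {x | a x = 0}.Nonempty ∧ {x | a x = 0}.Finite ∧
  ((cayley S).induce {x | a x = 0}).Connected

/-- Condition (A₂): some sublevel set `{a ≤ M}` is finite and nonempty. -/
def CondA2 (a : G → ℝ) : Prop :=
  ∃ M : ℝ, 0 < M ∧ {x | a x ≤ M}.Finite ∧ {x | a x ≤ M}.Nonempty

/-- The density `|Δu|² + |∇u|² + u²` of the `W^{2,2}` norm. -/
def wDensity [Group G] (S : Finset G) (u : G → ℝ) (x : G) : ℝ :=
  (lap S u x) ^ 2 + grad S u u x + (u x) ^ 2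

/-- Membership in `W^{2,2}(G)`. -/
def MemW [Group G] (S : Finset G) (u : G → ℝ) : Prop := Summable (wDensity S u)

/-- `‖u‖²_{W^{2,2}}`. -/
def normWsq [Group G] (S : Finset G) (u : G → ℝ) : ℝ := ∑' x, wDensity S u x

/-- Membership in `E(Ω)`: vanishing outside `Ω`. -/
def MemEOm (Ω : Set G) (u : G → ℝ) : Prop := ∀ x ∉ Ω, u x = 0

/-- `‖u‖²_{E(Ω)}`. -/
def normOmSq [Group G] (S : Finset G) (Ω : Set G) (u : G → ℝ) : ℝ :=
  (∑' x, ((lap S u x) ^ 2 + grad S u u x)) + ∑' x : Ω, (u (x : G)) ^ 2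

/-- The nonlocal term over `Ω`. -/
def DtermOm [DecidableEq G] (Ω : Set G) (R : G → G → ℝ) (p : ℝ) (u : G → ℝ) : ℝ :=
  ∑' x : Ω, conv R (fun y => |u y| ^ p) (x : G) * |u (x : G)| ^ p

/-- The limiting energy functional `J_Ω`. -/
def JOm [Group G] [DecidableEq G] (S : Finset G) (Ω : Set G) (R : G → G → ℝ) (p : ℝ)
    (u : G → ℝ) : ℝ :=
  (1 / 2) * normOmSq S Ω u - (1 / (2 * p)) * DtermOm Ω R p u

/-- The derivative pairing `(J'_Ω(u), v)`. -/
def JdOm [Group G] [DecidableEq G] (S : Finset G) (Ω : Set G) (R : G → G → ℝ) (p : ℝ)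
    (u v : G → ℝ) : ℝ :=
  (∑' x, (lap S u x * lap S v x + grad S u v x)) + (∑' x : Ω, u (x : G) * v (x : G))
    - ∑' x : Ω, conv R (fun y => |u y| ^ p) (x : G) * (|u (x : G)| ^ (p - 2) * u (x : G) * v (x : G))

/-- The Nehari manifold `N_Ω`. -/
def nehariOm [Group G] [DecidableEq G] (S : Finset G) (Ω : Set G) (R : G → G → ℝ)
    (p : ℝ) : Set (G → ℝ) :=
  {u | MemEOm Ω u ∧ u ≠ 0 ∧ JdOm S Ω R p u u = 0}

/-- `m_Ω = inf_{N_Ω} J_Ω`. -/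
def mOm [Group G] [DecidableEq G] (S : Finset G) (Ω : Set G) (R : G → G → ℝ) (p : ℝ) : ℝ :=
  sInf (JOm S Ω R p '' nehariOm S Ω R p)

/-- Summability of a radial power weight under a polynomial counting bound. -/
lemma summable_weight (ψ : G → ℕ) (C : ℝ) (hC : 0 < C) (N : ℕ) (β : ℝ) (hβ : (N : ℝ) < β)
    (hfin : ∀ r : ℝ, 1 ≤ r → {x | (ψ x : ℝ) ≤ r}.Finite)
    (hcard : ∀ r : ℝ, 1 ≤ r → ({x | (ψ x : ℝ) ≤ r}.ncard : ℝ) ≤ C * r ^ N) :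
    Summable (fun x => (ψ x : ℝ) ^ (-β)) := by
  have hβ0 : 0 < β := lt_of_le_of_lt (Nat.cast_nonneg N) hβ
  set q : ℝ := (2 : ℝ) ^ ((N : ℝ) - β) with hq
  have hq0 : 0 ≤ q := by positivity
  have hq1 : q < 1 := Real.rpow_lt_one_of_one_lt_of_neg (by norm_num) (by linarith)
  have hgeo : Summable (fun m : ℕ => (C * 2 ^ N) * q ^ m) :=
    (summable_geometric_of_lt_one hq0 hq1).mul_left _
  refine summable_of_sum_le (c := ∑' m : ℕ, (C * 2 ^ N) * q ^ m)
    (fun x => by positivity) (fun F => ?_)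
  classical
  set T : Finset ℕ := F.image (fun x => Nat.log 2 (ψ x)) with hT
  rw [← Finset.sum_fiberwise_of_maps_to (t := T) (g := fun x => Nat.log 2 (ψ x))
    (fun x hx => Finset.mem_image_of_mem _ hx)]
  refine le_trans (Finset.sum_le_sum (fun m _ => ?_)) (hgeo.sum_le_tsum T (fun m _ => by positivity))
  have hr : (1 : ℝ) ≤ 2 ^ (m + 1) := one_le_pow₀ (by norm_num)
  have hterm : ∀ x ∈ F.filter (fun x => Nat.log 2 (ψ x) = m),
      (ψ x : ℝ) ^ (-β) ≤ ((2 : ℝ) ^ m) ^ (-β) := by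
    intro x hx
    have hx2 := (Finset.mem_filter.1 hx).2
    by_cases h0 : ψ x = 0
    · rw [h0, Nat.cast_zero, Real.zero_rpow (by linarith)]
      positivity
    · apply Real.rpow_le_rpow_of_nonpos (by positivity) _ (by linarith)
      have := Nat.pow_log_le_self 2 h0
      rw [hx2] at this
      exact_mod_cast this
  have hsub : ((F.filter (fun x => Nat.log 2 (ψ x) = m) : Finset G) : Set G) ⊆
      {x | (ψ x : ℝ) ≤ 2 ^ (m + 1)} := by
    intro x hx
    have hx2 := (Finset.mem_filter.1 hx).2
    have := Nat.lt_pow_succ_log_self (b := 2) (by norm_num) (ψ x)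
    rw [hx2] at this
    have h3 := this.le
    simp only [Set.mem_ofPred_eq]
    exact_mod_cast h3
  have hc : ((F.filter (fun x => Nat.log 2 (ψ x) = m)).card : ℝ) ≤ C * (2 ^ (m + 1)) ^ N := by
    refine le_trans ?_ (hcard _ hr)
    have := Set.ncard_le_ncard hsub (hfin _ hr)
    rw [Set.ncard_coe_finset] at this
    exact_mod_cast this
  calc _ ≤ ∑ x ∈ F.filter (fun x => Nat.log 2 (ψ x) = m), ((2 : ℝ) ^ m) ^ (-β) :=
        Finset.sum_le_sum hterm
    _ = ((F.filter (fun x => Nat.log 2 (ψ x) = m)).card : ℝ) * ((2 : ℝ) ^ m) ^ (-β) := by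
        rw [Finset.sum_const, nsmul_eq_mul]
    _ ≤ (C * (2 ^ (m + 1)) ^ N) * ((2 : ℝ) ^ m) ^ (-β) := by gcongr
    _ = (C * 2 ^ N) * q ^ m := by
        have e1 : ((2 : ℝ) ^ m) ^ (-β) = ((2 : ℝ) ^ (-β)) ^ m := by
          rw [← Real.rpow_natCast, ← Real.rpow_mul (by norm_num), ← Real.rpow_natCast,
            ← Real.rpow_mul (by norm_num), mul_comm]
        have e2 : q = 2 ^ N * (2 : ℝ) ^ (-β) := by
          rw [hq, sub_eq_add_neg, Real.rpow_add (by norm_num), Real.rpow_natCast]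
        rw [e1, e2, mul_pow]
        ring

/-- Pointwise Young-type inequality. -/
lemma young_pt (p q : ℝ) (hq1 : 1 < q) (hq2 : q < 2) (hqp : q ≤ p) (K t w : ℝ) (hK : 0 ≤ K)
    (ht : 0 ≤ t) (ht1 : t ≤ 1) (hw : 0 ≤ w) (hw1 : w ≤ 1) :
    K * (t ^ p * w ^ p) ≤ t ^ 2 * w ^ 2 + t ^ 2 * K ^ (1 / (2 - q)) + w ^ 2 * K ^ (1 / (2 - q)) := by
  have h1 : t ^ p ≤ t ^ q := Real.rpow_le_rpow_of_exponent_ge_of_imp ht ht1 hqp (by intro _ h; linarith)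
  have h2 : w ^ p ≤ w ^ q := Real.rpow_le_rpow_of_exponent_ge_of_imp hw hw1 hqp (by intro _ h; linarith)
  set L := K ^ (1 / (2 - q)) with hL
  have hL0 : 0 ≤ L := by positivity
  have hKL : K = L ^ (2 - q) := by
    rw [hL, ← Real.rpow_mul hK, one_div, inv_mul_cancel₀ (by linarith), Real.rpow_one]
  have hsq : ∀ z : ℝ, 0 ≤ z → ∀ r : ℝ, (z ^ 2) ^ r = z ^ (2 * r) := by
    intro z hz r
    rw [← Real.rpow_natCast, ← Real.rpow_mul hz]; norm_num
  have hg := Real.geom_mean_le_arith_mean3_weighted (w₁ := q - 1) (w₂ := 1 - q / 2) (w₃ := 1 - q / 2)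
    (p₁ := t ^ 2 * w ^ 2) (p₂ := t ^ 2 * L) (p₃ := w ^ 2 * L) (by linarith) (by linarith) (by linarith)
    (by positivity) (by positivity) (by positivity) (by ring)
  have e : (t ^ 2 * w ^ 2) ^ (q - 1) * (t ^ 2 * L) ^ (1 - q / 2) * (w ^ 2 * L) ^ (1 - q / 2)
      = K * (t ^ q * w ^ q) := by
    rw [Real.mul_rpow (by positivity) (by positivity), Real.mul_rpow (by positivity) hL0,
      Real.mul_rpow (by positivity) hL0, hsq t ht, hsq w hw, hsq t ht, hsq w hw]
    have et : t ^ q = t ^ (2 * (q - 1)) * t ^ (2 * (1 - q / 2)) := by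
      rw [← Real.rpow_add_of_nonneg ht (by linarith) (by linarith)]; congr 1; ring
    have ew : w ^ q = w ^ (2 * (q - 1)) * w ^ (2 * (1 - q / 2)) := by
      rw [← Real.rpow_add_of_nonneg hw (by linarith) (by linarith)]; congr 1; ring
    have eK : K = L ^ (1 - q / 2) * L ^ (1 - q / 2) := by
      rw [← Real.rpow_add_of_nonneg hL0 (by linarith) (by linarith), hKL]; congr 1; ring
    rw [et, ew, eK]; ring
  rw [e] at hg
  have b1 : (q - 1) * (t ^ 2 * w ^ 2) ≤ t ^ 2 * w ^ 2 :=
    mul_le_of_le_one_left (by positivity) (by linarith)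
  have b2 : (1 - q / 2) * (t ^ 2 * L) ≤ t ^ 2 * L :=
    mul_le_of_le_one_left (by positivity) (by linarith)
  have b3 : (1 - q / 2) * (w ^ 2 * L) ≤ w ^ 2 * L :=
    mul_le_of_le_one_left (by positivity) (by linarith)
  have b4 : K * (t ^ p * w ^ p) ≤ K * (t ^ q * w ^ q) := by gcongr
  linarith

/-- Normalised bilinear estimate. -/
lemma bilin_one [Group G] (p q : ℝ) (hq1 : 1 < q) (hq2 : q < 2) (hqp : q ≤ p)
    (k : G → G → ℝ) (hk : ∀ x y, 0 ≤ k x y) (h : G → ℝ) (hh : Summable h) (hh0 : ∀ g, 0 ≤ h g)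
    (hkh : ∀ x y, k x y ^ (1 / (2 - q)) ≤ h (x⁻¹ * y))
    (u v : G → ℝ) (hu : Summable fun x => u x ^ 2) (hv : Summable fun x => v x ^ 2)
    (hu1 : ∑' x, u x ^ 2 ≤ 1) (hv1 : ∑' x, v x ^ 2 ≤ 1) :
    Summable (fun z : G × G => k z.1 z.2 * (|u z.1| ^ p * |v z.2| ^ p)) ∧
    ∑' z : G × G, k z.1 z.2 * (|u z.1| ^ p * |v z.2| ^ p) ≤ 1 + 2 * ∑' g, h g := by
  have hub : ∀ x, |u x| ≤ 1 := fun x => by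
    have := hu.le_tsum x (fun _ _ => sq_nonneg _)
    rw [← sq_le_one_iff_abs_le_one]; linarith
  have hvb : ∀ x, |v x| ≤ 1 := fun x => by
    have := hv.le_tsum x (fun _ _ => sq_nonneg _)
    rw [← sq_le_one_iff_abs_le_one]; linarith
  let e1 : G × G ≃ G × G :=
    { toFun := fun z => (z.1, z.1⁻¹ * z.2)
      invFun := fun z => (z.1, z.1 * z.2)
      left_inv := fun z => by simp
      right_inv := fun z => by simp }
  let e2 : G × G ≃ G × G :=
    { toFun := fun z => (z.2, z.1⁻¹ * z.2)
      invFun := fun z => (z.1 * z.2⁻¹, z.1)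
      left_inv := fun z => by simp
      right_inv := fun z => by simp }
  have s1 : Summable (fun z : G × G => u z.1 ^ 2 * v z.2 ^ 2) :=
    hu.mul_of_nonneg hv (fun _ => sq_nonneg _) (fun _ => sq_nonneg _)
  have s2' : Summable (fun z : G × G => u z.1 ^ 2 * h z.2) :=
    hu.mul_of_nonneg hh (fun _ => sq_nonneg _) hh0
  have s3' : Summable (fun z : G × G => v z.1 ^ 2 * h z.2) :=
    hv.mul_of_nonneg hh (fun _ => sq_nonneg _) hh0
  have s2 : Summable (fun z : G × G => u z.1 ^ 2 * h (z.1⁻¹ * z.2)) := e1.summable_iff.2 s2'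
  have s3 : Summable (fun z : G × G => v z.2 ^ 2 * h (z.1⁻¹ * z.2)) := e2.summable_iff.2 s3'
  have t1 : ∑' z : G × G, u z.1 ^ 2 * v z.2 ^ 2 = (∑' x, u x ^ 2) * ∑' x, v x ^ 2 :=
    (hu.tsum_mul_tsum hv s1).symm
  have t2 : ∑' z : G × G, u z.1 ^ 2 * h (z.1⁻¹ * z.2) = (∑' x, u x ^ 2) * ∑' x, h x :=
    (e1.tsum_eq (fun z : G × G => u z.1 ^ 2 * h z.2)).trans (hu.tsum_mul_tsum hh s2').symm
  have t3 : ∑' z : G × G, v z.2 ^ 2 * h (z.1⁻¹ * z.2) = (∑' x, v x ^ 2) * ∑' x, h x :=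
    (e2.tsum_eq (fun z : G × G => v z.1 ^ 2 * h z.2)).trans (hv.tsum_mul_tsum hh s3').symm
  have hb : ∀ z : G × G, k z.1 z.2 * (|u z.1| ^ p * |v z.2| ^ p) ≤
      u z.1 ^ 2 * v z.2 ^ 2 + u z.1 ^ 2 * h (z.1⁻¹ * z.2) + v z.2 ^ 2 * h (z.1⁻¹ * z.2) := by
    intro z
    refine (young_pt p q hq1 hq2 hqp _ _ _ (hk z.1 z.2) (abs_nonneg _) (hub _) (abs_nonneg _)
      (hvb _)).trans ?_
    rw [sq_abs, sq_abs]
    have := hkh z.1 z.2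
    gcongr
  have hn : ∀ z : G × G, 0 ≤ k z.1 z.2 * (|u z.1| ^ p * |v z.2| ^ p) := fun z =>
    mul_nonneg (hk _ _) (by positivity)
  have hs := (s1.add s2).add s3
  have hS := Summable.of_nonneg_of_le hn hb hs
  refine ⟨hS, (hS.tsum_le_tsum hb hs).trans ?_⟩
  rw [(s1.add s2).tsum_add s3, s1.tsum_add s2, t1, t2, t3]
  have hH : 0 ≤ ∑' g, h g := tsum_nonneg hh0
  have hU : 0 ≤ ∑' x, u x ^ 2 := tsum_nonneg (fun _ => sq_nonneg _)
  have hV : 0 ≤ ∑' x, v x ^ 2 := tsum_nonneg (fun _ => sq_nonneg _)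
  have := mul_le_of_le_one_left hH hu1
  have := mul_le_of_le_one_left hH hv1
  have := mul_le_one₀ hu1 hV hv1
  linarith

/-- Bilinear estimate, homogeneous version. -/
lemma bilin [Group G] (p q : ℝ) (hq1 : 1 < q) (hq2 : q < 2) (hqp : q ≤ p)
    (k : G → G → ℝ) (hk : ∀ x y, 0 ≤ k x y) (h : G → ℝ) (hh : Summable h) (hh0 : ∀ g, 0 ≤ h g)
    (hkh : ∀ x y, k x y ^ (1 / (2 - q)) ≤ h (x⁻¹ * y)) (A B : ℝ) (hA : 0 < A) (hB : 0 < B)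
    (u v : G → ℝ) (hu : Summable fun x => u x ^ 2) (hv : Summable fun x => v x ^ 2)
    (huA : ∑' x, u x ^ 2 ≤ A) (hvB : ∑' x, v x ^ 2 ≤ B) :
    Summable (fun z : G × G => k z.1 z.2 * (|u z.1| ^ p * |v z.2| ^ p)) ∧
    ∑' z : G × G, k z.1 z.2 * (|u z.1| ^ p * |v z.2| ^ p) ≤
      (√A ^ p * √B ^ p) * (1 + 2 * ∑' g, h g) := by
  have key : ∀ (A : ℝ) (_ : 0 < A) (u : G → ℝ), (fun x => (u x / √A) ^ 2) = fun x => u x ^ 2 / A := by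
    intro A hA u; funext x; rw [div_pow, Real.sq_sqrt hA.le]
  obtain ⟨h1, h2⟩ := bilin_one p q hq1 hq2 hqp k hk h hh hh0 hkh (fun x => u x / √A)
    (fun x => v x / √B) (by rw [key A hA]; exact hu.div_const A) (by rw [key B hB]; exact hv.div_const B)
    (by rw [key A hA, tsum_div_const]; exact (div_le_one hA).2 huA)
    (by rw [key B hB, tsum_div_const]; exact (div_le_one hB).2 hvB)
  have hsA : 0 < √A := Real.sqrt_pos.2 hA
  have hsB : 0 < √B := Real.sqrt_pos.2 hB
  have e : (fun z : G × G => k z.1 z.2 * (|u z.1| ^ p * |v z.2| ^ p)) = fun z : G × G =>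
      (√A ^ p * √B ^ p) * (k z.1 z.2 * (|u z.1 / √A| ^ p * |v z.2 / √B| ^ p)) := by
    funext z
    rw [abs_div, abs_div, abs_of_pos hsA, abs_of_pos hsB, Real.div_rpow (abs_nonneg _) hsA.le,
      Real.div_rpow (abs_nonneg _) hsB.le]
    have : √A ^ p ≠ 0 := by positivity
    have : √B ^ p ≠ 0 := by positivity
    field_simp
  rw [e]
  refine ⟨h1.mul_left _, ?_⟩
  rw [tsum_mul_left]
  exact mul_le_mul_of_nonneg_left h2 (by positivity)

/-- The key (non-endpoint Hardy-Littlewood-Sobolev) estimate on `ℓ²`. -/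
lemma conv_bound [Group G] [DecidableEq G] (S : Finset G) (N : ℕ) (hN : 2 ≤ N)
    (hgrowth : PolyGrowth S N) (α : ℝ) (hαN : α < (N : ℝ)) (hα0 : 0 < α)
    (R : G → G → ℝ) (hR : RieszKernel S N α R)
    (p : ℝ) (hp : ((N : ℝ) + α) / (N : ℝ) < p) :
    ∃ C : ℝ, 0 < C ∧ ∀ (A B : ℝ), 0 < A → 0 < B → ∀ u v : G → ℝ,
      (Summable fun x => u x ^ 2) → (Summable fun x => v x ^ 2) →
      ∑' x, u x ^ 2 ≤ A → ∑' x, v x ^ 2 ≤ B →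
      Summable (fun x => conv R (fun y => |v y| ^ p) x * |u x| ^ p) ∧
      ∑' x, conv R (fun y => |v y| ^ p) x * |u x| ^ p ≤ (√A ^ p * √B ^ p) * C := by
  have hN0 : (0 : ℝ) < N := by exact_mod_cast (by omega : 0 < N)
  obtain ⟨hRpos, c₁, c₂, hc1, hc2, hRb⟩ := hR
  obtain ⟨C₁, C₂, hC1, hC2, hg⟩ := hgrowth
  have hlow1 : 1 < ((N : ℝ) + α) / N := by rw [lt_div_iff₀ hN0]; linarith
  have hlow2 : ((N : ℝ) + α) / N < 2 := by rw [div_lt_iff₀ hN0]; linarith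
  obtain ⟨q, hqlow, hqup⟩ := exists_between (lt_min hp hlow2)
  have hqp : q ≤ p := (hqup.trans_le (min_le_left _ _)).le
  have hq2 : q < 2 := hqup.trans_le (min_le_right _ _)
  have hq1 : 1 < q := hlow1.trans hqlow
  have h2q : 0 < 2 - q := by linarith
  set β : ℝ := ((N : ℝ) - α) * (1 / (2 - q)) with hβ
  have hβN : (N : ℝ) < β := by
    rw [hβ, mul_one_div, lt_div_iff₀ h2q]
    rw [div_lt_iff₀ hN0] at hqlow
    linarith
  have hfin : ∀ r : ℝ, 1 ≤ r → {x : G | (wordDist S x 1 : ℝ) ≤ r}.Finite := by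
    intro r hr
    by_contra hinf
    have h0 : (ball S (1 : G) r).ncard = 0 := Set.Infinite.ncard hinf
    have := (hg r hr).1
    rw [h0, Nat.cast_zero] at this
    have : 0 < C₁ * r ^ N := by positivity
    linarith
  have hw := summable_weight (fun x : G => wordDist S x 1) C₂ hC2 N β hβN hfin
    (fun r hr => (hg r hr).2)
  set h : G → ℝ := fun g => c₂ ^ (1 / (2 - q)) * (wordDist S g⁻¹ 1 : ℝ) ^ (-β) with hhdef
  have hh : Summable h := ((Equiv.inv G).summable_iff.2 hw).mul_left _
  have hh0 : ∀ g, 0 ≤ h g := fun g => by positivity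
  have hdist : ∀ x y : G, wordDist S (x⁻¹ * y)⁻¹ 1 = wordDist S x y := by
    intro x y; simp [wordDist]
  set k : G → G → ℝ := fun x y => if y = x then 0 else R x y with hkdef
  have hk : ∀ x y, 0 ≤ k x y := by
    intro x y; simp only [hkdef]; split_ifs
    · exact le_rfl
    · exact (hRpos x y).le
  have hs0 : 0 < 1 / (2 - q) := by positivity
  have hkh : ∀ x y, k x y ^ (1 / (2 - q)) ≤ h (x⁻¹ * y) := by
    intro x y
    by_cases hxy : y = x
    · simp only [hkdef, if_pos hxy]
      rw [Real.zero_rpow hs0.ne']; exact hh0 _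
    · simp only [hkdef, if_neg hxy, hhdef, hdist]
      refine (Real.rpow_le_rpow (hRpos x y).le (hRb x y (Ne.symm hxy)).2 hs0.le).trans ?_
      rw [Real.mul_rpow hc2.le (by positivity), ← Real.rpow_mul (by positivity)]
      apply le_of_eq; congr 2; rw [hβ]; ring
  have hH : 0 ≤ ∑' g, h g := tsum_nonneg hh0
  refine ⟨1 + 2 * ∑' g, h g, by linarith, ?_⟩
  intro A B hA hB u v hu hv huA hvB
  obtain ⟨hS, hT⟩ := bilin p q hq1 hq2 hqp k hk h hh hh0 hkh A B hA hB u v hu hv huA hvB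
  have e : (fun x => conv R (fun y => |v y| ^ p) x * |u x| ^ p) =
      fun x => ∑' y, k x y * (|u x| ^ p * |v y| ^ p) := by
    funext x
    rw [conv, ← tsum_mul_right]
    congr 1; funext y
    simp only [hkdef]; split_ifs
    · simp
    · ring
  rw [e]
  refine ⟨hS.prod, ?_⟩
  rw [← hS.tsum_prod]
  exact hT

lemma conv_nonneg [DecidableEq G] (R : G → G → ℝ) (hR : ∀ x y, 0 < R x y) (f : G → ℝ)
    (hf : ∀ y, 0 ≤ f y) (x : G) : 0 ≤ conv R f x := by
  refine tsum_nonneg (fun y => ?_)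
  split_ifs
  · exact le_rfl
  · exact mul_nonneg (hR x y).le (hf y)

lemma grad_self_nonneg [Group G] (S : Finset G) (u : G → ℝ) (x : G) : 0 ≤ grad S u u x := by
  unfold grad
  exact mul_nonneg (by norm_num) (Finset.sum_nonneg fun s _ => mul_self_nonneg _)

lemma abs_grad_le [Group G] (S : Finset G) (u v : G → ℝ) (x : G) :
    |grad S u v x| ≤ grad S u u x + grad S v v x := by
  unfold grad
  rw [abs_mul, abs_of_pos (by norm_num : (0 : ℝ) < 1 / 2), ← mul_add, ← Finset.sum_add_distrib]
  refine mul_le_mul_of_nonneg_left ((Finset.abs_sum_le_sum_abs _ _).trans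
    (Finset.sum_le_sum fun s _ => ?_)) (by norm_num)
  rw [abs_le]
  constructor <;> nlinarith [sq_nonneg (u (x * s) - u x + (v (x * s) - v x)),
    sq_nonneg (u (x * s) - u x - (v (x * s) - v x)), sq_nonneg (u (x * s) - u x),
    sq_nonneg (v (x * s) - v x)]

lemma abs_mul_le_sq (b c : ℝ) : |b * c| ≤ b ^ 2 + c ^ 2 := by
  rw [abs_le]
  constructor <;> nlinarith [sq_nonneg (b + c), sq_nonneg (b - c), sq_nonneg b, sq_nonneg c]

lemma sq_le_eDensity [Group G] (S : Finset G) (a : G → ℝ) (ha : ∀ x, 0 ≤ a x) (lam : ℝ)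
    (u : G → ℝ) (x : G) : (1 + lam * a x) * u x ^ 2 ≤ eDensity S a lam u x := by
  unfold eDensity
  have := grad_self_nonneg S u x
  nlinarith [sq_nonneg (lap S u x)]

/-- A bound for the inner product. -/
lemma abs_innerE_le [Group G] (S : Finset G) (a : G → ℝ) (ha : ∀ x, 0 ≤ a x) (lam : ℝ)
    (hlam : 0 ≤ lam) (u v : G → ℝ) (hu : MemE S a lam u) (hv : MemE S a lam v) :
    |innerE S a lam u v| ≤ normEsq S a lam u + normEsq S a lam v := by
  unfold innerE normEsq
  rw [← hu.tsum_add hv, ← Real.norm_eq_abs]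
  refine tsum_of_norm_bounded (hu.add hv).hasSum (fun x => ?_)
  rw [Real.norm_eq_abs]
  unfold eDensity
  have h1 := abs_mul_le_sq (lap S u x) (lap S v x)
  have h2 := abs_grad_le S u v x
  have h3 : |(1 + lam * a x) * (u x * v x)| ≤ (1 + lam * a x) * (u x ^ 2 + v x ^ 2) := by
    have h0 : 0 ≤ 1 + lam * a x := by have := mul_nonneg hlam (ha x); linarith
    rw [abs_mul, abs_of_nonneg h0]
    exact mul_le_mul_of_nonneg_left (abs_mul_le_sq _ _) h0
  have h4 := abs_add_le (lap S u x * lap S v x + grad S u v x) ((1 + lam * a x) * (u x * v x))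
  have h5 := abs_add_le (lap S u x * lap S v x) (grad S u v x)
  nlinarith

lemma normEsq_smul [Group G] (S : Finset G) (a : G → ℝ) (lam t : ℝ) (u : G → ℝ) (x : G) :
    eDensity S a lam (fun y => t * u y) x = t ^ 2 * eDensity S a lam u x := by
  unfold eDensity lap grad
  have h1 : ∑ s ∈ S, (t * u (x * s) - t * u x) = t * ∑ s ∈ S, (u (x * s) - u x) := by
    rw [Finset.mul_sum]; exact Finset.sum_congr rfl fun s _ => by ring
  have h2 : ∑ s ∈ S, (t * u (x * s) - t * u x) * (t * u (x * s) - t * u x) =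
      t ^ 2 * ∑ s ∈ S, (u (x * s) - u x) * (u (x * s) - u x) := by
    rw [Finset.mul_sum]; exact Finset.sum_congr rfl fun s _ => by ring
  rw [h1, h2]; ring

lemma innerE_smul [Group G] (S : Finset G) (a : G → ℝ) (lam t : ℝ) (u : G → ℝ) :
    innerE S a lam u (fun y => t * u y) = t * normEsq S a lam u := by
  unfold innerE normEsq
  rw [← tsum_mul_left]
  congr 1; funext x
  unfold eDensity lap grad
  have h1 : ∑ s ∈ S, (t * u (x * s) - t * u x) = t * ∑ s ∈ S, (u (x * s) - u x) := by
    rw [Finset.mul_sum]; exact Finset.sum_congr rfl fun s _ => by ring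
  have h2 : ∑ s ∈ S, (u (x * s) - u x) * (t * u (x * s) - t * u x) =
      t * ∑ s ∈ S, (u (x * s) - u x) * (u (x * s) - u x) := by
    rw [Finset.mul_sum]; exact Finset.sum_congr rfl fun s _ => by ring
  rw [h1, h2]; ring

lemma Kterm_smul [DecidableEq G] (R : G → G → ℝ) (p : ℝ) (hp : 1 < p) (t : ℝ) (u : G → ℝ) :
    Kterm R p u (fun y => t * u y) = t * Dterm R p u := by
  unfold Kterm Dterm
  rw [← tsum_mul_left]
  congr 1; funext x
  have : |u x| ^ (p - 2) * (u x * u x) = |u x| ^ p := by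
    by_cases h0 : u x = 0
    · rw [h0, abs_zero, Real.zero_rpow (by linarith : p ≠ 0)]; ring
    · have hpos : 0 < |u x| := abs_pos.2 h0
      rw [← abs_mul_abs_self (u x), ← sq, ← Real.rpow_natCast, ← Real.rpow_add hpos]
      congr 1; norm_num
  rw [← this]; ring

lemma mixed_pow_le (p : ℝ) (hp : 1 < p) (b c : ℝ) :
    |(|b| ^ (p - 2) * b * c)| ≤ |b| ^ p + |c| ^ p := by
  rw [abs_mul, abs_mul, abs_of_nonneg (by positivity : (0 : ℝ) ≤ |b| ^ (p - 2))]
  by_cases h0 : b = 0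
  · rw [h0]; simp only [abs_zero, mul_zero, zero_mul]; positivity
  have hpos : 0 < |b| := abs_pos.2 h0
  have e : |b| ^ (p - 2) * |b| = |b| ^ (p - 1) := by
    rw [← Real.rpow_add_one hpos.ne']; congr 1; ring
  rw [e]
  have split : ∀ z : ℝ, 0 ≤ z → z ^ p = z ^ (p - 1) * z := by
    intro z hz
    conv_rhs => rw [← Real.rpow_one z, ← Real.rpow_mul hz, one_mul]
    rw [← Real.rpow_add_of_nonneg hz (by linarith) zero_le_one]; congr 1; ring
  rcases le_total |b| |c| with hbc | hbc
  · have h1 : |b| ^ (p - 1) ≤ |c| ^ (p - 1) := Real.rpow_le_rpow hpos.le hbc (by linarith)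
    have h2 := mul_le_mul_of_nonneg_right h1 (abs_nonneg c)
    rw [← split _ (abs_nonneg c)] at h2
    have : 0 ≤ |b| ^ p := by positivity
    linarith
  · have h2 := mul_le_mul_of_nonneg_left hbc (by positivity : 0 ≤ |b| ^ (p - 1))
    rw [← split _ (abs_nonneg b)] at h2
    have : 0 ≤ |c| ^ p := by positivity
    linarith

lemma memE_sq [Group G] (S : Finset G) (a : G → ℝ) (ha : ∀ x, 0 ≤ a x) (lam : ℝ)
    (hlam : 0 ≤ lam) (u : G → ℝ) (hu : MemE S a lam u) :
    (Summable fun x => u x ^ 2) ∧ ∑' x, u x ^ 2 ≤ normEsq S a lam u := by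
  have hb : ∀ x, u x ^ 2 ≤ eDensity S a lam u x := fun x => by
    refine le_trans ?_ (sq_le_eDensity S a ha lam u x)
    nlinarith [sq_nonneg (u x), mul_nonneg (mul_nonneg hlam (ha x)) (sq_nonneg (u x))]
  have hs := Summable.of_nonneg_of_le (fun x => sq_nonneg (u x)) hb hu
  exact ⟨hs, hs.tsum_le_tsum hb hu⟩

/-- The basic estimate on `J'(u)u` in terms of the dual norm. -/
lemma abs_Jd_self_le [Group G] [DecidableEq G] (S : Finset G) (R : G → G → ℝ)
    (hRpos : ∀ x y, 0 < R x y) (p : ℝ) (hp : 1 < p) (C : ℝ)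
    (hC : ∀ (A B : ℝ), 0 < A → 0 < B → ∀ u v : G → ℝ,
      (Summable fun x => u x ^ 2) → (Summable fun x => v x ^ 2) →
      ∑' x, u x ^ 2 ≤ A → ∑' x, v x ^ 2 ≤ B →
      Summable (fun x => conv R (fun y => |v y| ^ p) x * |u x| ^ p) ∧
      ∑' x, conv R (fun y => |v y| ^ p) x * |u x| ^ p ≤ (√A ^ p * √B ^ p) * C)
    (a : G → ℝ) (ha : ∀ x, 0 ≤ a x) (lam : ℝ) (hlam : 0 ≤ lam) (u : G → ℝ) (hu : MemE S a lam u) :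
    |normEsq S a lam u - Dterm R p u| ≤ dualNorm S a lam R p u * (normEsq S a lam u + 1) := by
  set E := normEsq S a lam u with hE
  obtain ⟨hu2, huE⟩ := memE_sq S a ha lam hlam u hu
  have hE0 : 0 ≤ E := (tsum_nonneg (fun x => sq_nonneg (u x))).trans huE
  have hbdd : BddAbove {t : ℝ | ∃ v, MemE S a lam v ∧ normEsq S a lam v ≤ 1 ∧
      t = |Jd S a lam R p u v|} := by
    refine ⟨(E + 1) + ((√(E + 1) ^ p * √(E + 1) ^ p) * C + (√1 ^ p * √(E + 1) ^ p) * C), ?_⟩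
    rintro t ⟨v, hv, hv1, rfl⟩
    obtain ⟨hv2, hvE⟩ := memE_sq S a ha lam hlam v hv
    have h1 := abs_innerE_le S a ha lam hlam u v hu hv
    obtain ⟨s1, b1⟩ := hC (E + 1) (E + 1) (by linarith) (by linarith) u u hu2 hu2 (by linarith)
      (by linarith)
    obtain ⟨s2, b2⟩ := hC 1 (E + 1) (by linarith) (by linarith) v u hv2 hu2 (by linarith)
      (by linarith)
    have h2 : |Kterm R p u v| ≤ (√(E + 1) ^ p * √(E + 1) ^ p) * C + (√1 ^ p * √(E + 1) ^ p) * C := by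
      refine le_trans ?_ (add_le_add b1 b2)
      rw [← s1.tsum_add s2, ← Real.norm_eq_abs]
      unfold Kterm
      refine tsum_of_norm_bounded (s1.add s2).hasSum (fun x => ?_)
      have hc := conv_nonneg R hRpos (fun y => |u y| ^ p) (fun y => by positivity) x
      rw [Real.norm_eq_abs, abs_mul, abs_of_nonneg hc, ← mul_add]
      exact mul_le_mul_of_nonneg_left (mixed_pow_le p hp _ _) hc
    unfold Jd
    have h3 := abs_sub (innerE S a lam u v) (Kterm R p u v)
    linarith
  set t : ℝ := 1 / √(E + 1) with ht
  have hs1 : 0 < √(E + 1) := Real.sqrt_pos.2 (by linarith)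
  have hmem : |Jd S a lam R p u (fun y => t * u y)| ≤ dualNorm S a lam R p u := by
    refine le_csSup hbdd ⟨_, ?_, ?_, rfl⟩
    · unfold MemE
      rw [funext (normEsq_smul S a lam t u)]
      exact Summable.mul_left _ hu
    · unfold normEsq
      rw [funext (normEsq_smul S a lam t u), tsum_mul_left, ht, div_pow, one_pow,
        Real.sq_sqrt (by linarith)]
      change 1 / (E + 1) * E ≤ 1
      rw [one_div_mul_eq_div, div_le_one (by linarith)]
      linarith
  unfold Jd at hmem
  rw [innerE_smul, Kterm_smul R p hp, ← mul_sub, abs_mul, abs_of_pos (by positivity : 0 < t), ht,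
    one_div_mul_eq_div, div_le_iff₀ hs1] at hmem
  refine hmem.trans ?_
  have hd : 0 ≤ dualNorm S a lam R p u := Real.sSup_nonneg (by rintro t ⟨v, -, -, rfl⟩; positivity)
  refine mul_le_mul_of_nonneg_left ?_ hd
  rw [Real.sqrt_le_left (by linarith)]
  nlinarith

theorem PS_uniform_tail_estimate
    {G : Type*} [Group G] [Countable G] [DecidableEq G]
    (S : Finset G) (hSsymm : ∀ s ∈ S, s⁻¹ ∈ S)
    (hSgen : Subgroup.closure (S : Set G) = ⊤)
    (N : ℕ) (hN : 2 ≤ N) (hgrowth : PolyGrowth S N)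
    (α : ℝ) (hα0 : 0 < α) (hαN : α < (N : ℝ))
    (R : G → G → ℝ) (hR : RieszKernel S N α R)
    (p : ℝ) (hp : ((N : ℝ) + α) / (N : ℝ) < p)
    (a : G → ℝ) (ha : ∀ x, 0 ≤ a x)
    (hA1 : CondA1 S a) (hA2 : CondA2 a)
    (cstar : ℝ) (hcstar : 0 < cstar) :
    ∀ ε : ℝ, 0 < ε → ∃ lamε rε : ℝ, 0 < lamε ∧ 0 < rε ∧
      ∀ lam : ℝ, lamε ≤ lam → ∀ c : ℝ, c ≤ cstar → ∀ U : ℕ → G → ℝ,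
        PSseq S a lam R p c U →
        Filter.limsup (fun n => ∑' x : {x : G // rε < (wordDist S x 1 : ℝ)},
          conv R (fun y => |U n y| ^ p) (x : G) * |U n (x : G)| ^ p) atTop ≤ ε := by
  intro ε hε
  have hN0 : (0 : ℝ) < N := by exact_mod_cast (by omega : 0 < N)
  have hp1 : 1 < p := lt_trans (by rw [lt_div_iff₀ hN0]; linarith) hp
  have hp0 : 0 < p := by linarith
  obtain ⟨C, hC0, hC⟩ := conv_bound S N hN hgrowth α hαN hα0 R hR p hp
  have hRpos := hR.1
  obtain ⟨M, hM, hMfin, -⟩ := hA2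
  set θ : ℝ := 1 / 2 - 1 / (2 * p) with hθ
  have hθ0 : 0 < θ := by
    rw [hθ, sub_pos]
    apply one_div_lt_one_div_of_lt <;> linarith
  set K : ℝ := 2 * (cstar + 1) / θ + 1 with hK
  have hK0 : 0 < K := by positivity
  -- choice of the tail size
  set η : ℝ := (ε / (√K ^ p * C)) ^ (1 / p) with hη
  have hη0 : 0 < η := by positivity
  set δ : ℝ := η ^ 2 with hδ
  have hδ0 : 0 < δ := by positivity
  have hfinal : (√δ ^ p * √K ^ p) * C ≤ ε := by
    rw [hδ, Real.sqrt_sq hη0.le, hη, ← Real.rpow_mul (by positivity), one_div_mul_cancel hp0.ne',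
      Real.rpow_one]
    apply le_of_eq
    have : √K ^ p ≠ 0 := by positivity
    field_simp
  obtain ⟨r, hr⟩ := (hMfin.image (fun x => (wordDist S x 1 : ℝ))).bddAbove
  refine ⟨K / (M * δ), |r| + 1, by positivity, by positivity, ?_⟩
  intro lam hlam c hc U hU
  obtain ⟨hUE, hUJ, hUd⟩ := hU
  have hlam0 : 0 < lam := lt_of_lt_of_le (by positivity) hlam
  have hnn : ∀ n x, 0 ≤ conv R (fun y => |U n y| ^ p) x * |U n x| ^ p := fun n x =>
    mul_nonneg (conv_nonneg R hRpos _ (fun y => by positivity) x) (by positivity)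
  refine Filter.limsup_le_of_le
    (Filter.isCoboundedUnder_le_of_le atTop (x := 0) (fun n => tsum_nonneg fun x => hnn n x)) ?_
  have ev1 : ∀ᶠ n in atTop, Jfun S a lam R p (U n) < cstar + 1 :=
    hUJ.eventually (gt_mem_nhds (by linarith))
  have ev2 : ∀ᶠ n in atTop, dualNorm S a lam R p (U n) < θ * p :=
    hUd.eventually (gt_mem_nhds (by positivity))
  filter_upwards [ev1, ev2] with n h1 h2
  set u := U n with hu
  set E := normEsq S a lam u with hE
  obtain ⟨hu2, huE⟩ := memE_sq S a ha lam hlam0.le u (hUE n)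
  have hE0 : 0 ≤ E := (tsum_nonneg (fun x => sq_nonneg (u x))).trans huE
  have hEK : E ≤ K := by
    have h3 := abs_Jd_self_le S R hRpos p hp1 C hC a ha lam hlam0.le u (hUE n)
    rw [← hE] at h3
    have h4 : |E - Dterm R p u| ≤ θ * p * (E + 1) :=
      h3.trans (mul_le_mul_of_nonneg_right h2.le (by linarith))
    have h5 := (abs_le.1 h4).2
    have h6 : Jfun S a lam R p u = θ * E + (1 / (2 * p)) * (E - Dterm R p u) := by
      unfold Jfun; rw [← hE, hθ]; ring
    have h7 := (abs_le.1 h4).1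
    have h8 : (1 / (2 * p)) * (-(θ * p * (E + 1))) ≤ (1 / (2 * p)) * (E - Dterm R p u) :=
      mul_le_mul_of_nonneg_left h7 (by positivity)
    have h9 : (1 / (2 * p)) * (-(θ * p * (E + 1))) = -(θ / 2 * (E + 1)) := by
      field_simp
    have h10 : θ * E ≤ 2 * (cstar + 1) + θ := by linarith
    have h11 : θ * K = 2 * (cstar + 1) + θ := by rw [hK]; field_simp
    rw [← h11] at h10
    exact le_of_mul_le_mul_left h10 hθ0
  -- the tail
  set T : Set G := {x : G | |r| + 1 < (wordDist S x 1 : ℝ)} with hT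
  set v : G → ℝ := T.indicator u with hv
  have hTa : ∀ x ∈ T, M < a x := by
    intro x hx
    by_contra hcon
    have h3 : (wordDist S x 1 : ℝ) ≤ r := hr (Set.mem_image_of_mem _ (not_lt.1 hcon))
    have h4 : |r| + 1 < (wordDist S x 1 : ℝ) := hx
    have := le_abs_self r
    linarith
  have hvb : ∀ x, v x ^ 2 ≤ (1 / (lam * M)) * eDensity S a lam u x := by
    intro x
    have h3 := sq_le_eDensity S a ha lam u x
    have h5 := mul_nonneg (mul_nonneg hlam0.le (ha x)) (sq_nonneg (u x))
    have hd : 0 ≤ eDensity S a lam u x := by nlinarith [sq_nonneg (u x)]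
    by_cases hx : x ∈ T
    · rw [hv, Set.indicator_of_mem hx, one_div_mul_eq_div, le_div_iff₀ (by positivity)]
      have h4 : lam * M * u x ^ 2 ≤ lam * a x * u x ^ 2 := by
        have := (hTa x hx).le
        gcongr
      nlinarith [sq_nonneg (u x)]
    · rw [hv, Set.indicator_of_notMem hx]
      have : 0 ≤ 1 / (lam * M) * eDensity S a lam u x := by positivity
      simpa using this
  have hEs : Summable (fun x => (1 / (lam * M)) * eDensity S a lam u x) :=
    Summable.mul_left _ (hUE n)
  have hv2 : Summable fun x => v x ^ 2 := Summable.of_nonneg_of_le (fun x => sq_nonneg _) hvb hEs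
  have hvδ : ∑' x, v x ^ 2 ≤ δ := by
    refine (hv2.tsum_le_tsum hvb hEs).trans ?_
    rw [tsum_mul_left]
    change 1 / (lam * M) * E ≤ δ
    rw [one_div_mul_eq_div, div_le_iff₀ (by positivity)]
    rw [div_le_iff₀ (by positivity)] at hlam
    linarith
  obtain ⟨-, hb⟩ := hC δ K hδ0 hK0 v u hv2 hu2 hvδ (huE.trans hEK)
  refine le_trans (le_of_eq ?_) (hb.trans hfinal)
  change ∑' x : T, (fun x => conv R (fun y => |u y| ^ p) x * |u x| ^ p) (x : G) = _
  refine (tsum_subtype T (fun x => conv R (fun y => |u y| ^ p) x * |u x| ^ p)).trans ?_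
  congr 1; funext x
  by_cases hx : x ∈ T
  · rw [Set.indicator_of_mem hx, hv, Set.indicator_of_mem hx]
  · rw [Set.indicator_of_notMem hx, hv, Set.indicator_of_notMem hx, abs_zero,
      Real.zero_rpow hp0.ne', mul_zero]

end Choquard
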